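/- For n >= 1, the number of ascent sequences of length n avoiding the three patterns 0101, 0120, and 0121 equals 2^n - n. -/

import Mathlib

/-- Number of ascents of a sequence (list) of natural numbers. -/
def asc (l : List ℕ) : ℕ :=
  ((List.range (l.length - 1)).filter (fun j => l.getD j 0 < l.getD (j + 1) 0)).length

/-- `x` is an ascent sequence: nonempty, starts with 0, and each later entry is
at most one more than the number of ascents of the preceding prefix. -/
def IsAscSeq (x : List ℕ) : Prop :=
  x ≠ [] ∧ x.getD 0 0 = 0 ∧
    ∀ i, 1 ≤ i → i < x.length → x.getD i 0 ≤ 1 + asc (x.take i)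

/-- `x` contains the pattern `p`: some subsequence of `x` is order-isomorphic
(including equalities) to `p`, i.e. its reduction equals `p`. -/
def Contains (p x : List ℕ) : Prop :=
  ∃ y : List ℕ, y.Sublist x ∧ y.length = p.length ∧
    ∀ i j, i < p.length → j < p.length →
      (y.getD i 0 < y.getD j 0 ↔ p.getD i 0 < p.getD j 0)

/-- `x` avoids the pattern `p`. -/
def Avoids (p x : List ℕ) : Prop := ¬ Contains p x

open scoped List

theorem asc_snoc (q : List ℕ) (u v : ℕ) :
    asc (q ++ [u] ++ [v]) = asc (q ++ [u]) + if u < v then 1 else 0 := by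
  unfold asc
  have h1 : (q ++ [u] ++ [v]).length - 1 = q.length + 1 := by simp
  have h2 : (q ++ [u]).length - 1 = q.length := by simp
  rw [h1, h2, List.range_succ, List.filter_append, List.length_append]
  congr 1
  · congr 1
    apply List.filter_congr
    intro j hj
    rw [List.mem_range] at hj
    rw [List.getD_append _ [v] _ j (by simp; omega), List.getD_append _ [v] _ (j+1) (by simp; omega)]
  · have e1 : (q ++ [u] ++ [v]).getD q.length 0 = u := by simp
    have e2 : (q ++ [u] ++ [v]).getD (q.length + 1) 0 = v := by simp [List.getD_eq_getElem?_getD]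
    rw [List.filter_singleton, e1, e2]
    by_cases h : u < v <;> simp [h]

theorem asc_snoc' (p : List ℕ) (u v : ℕ) (h : p.getLast? = some u) :
    asc (p ++ [v]) = asc p + if u < v then 1 else 0 := by
  obtain ⟨q, rfl⟩ := List.getLast?_eq_some_iff.1 h
  exact asc_snoc q u v

theorem isAsc_snoc (p : List ℕ) (v : ℕ) (hp : p ≠ []) :
    IsAscSeq (p ++ [v]) ↔ IsAscSeq p ∧ v ≤ 1 + asc p := by
  have hl : 0 < p.length := List.length_pos_iff.2 hp
  unfold IsAscSeq
  rw [List.getD_append _ _ _ 0 hl]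
  constructor
  · rintro ⟨-, h0, h⟩
    refine ⟨⟨hp, h0, ?_⟩, ?_⟩
    · intro i hi hi'
      have := h i hi (by simp; omega)
      rwa [List.getD_append _ _ _ i hi', List.take_append_of_le_length hi'.le] at this
    · have := h p.length hl (by simp)
      simpa using this
  · rintro ⟨⟨-, h0, h⟩, hv⟩
    refine ⟨by simp, h0, ?_⟩
    intro i hi hi'
    simp only [List.length_append, List.length_singleton] at hi'
    rcases Nat.lt_succ_iff_lt_or_eq.1 hi' with h2 | rfl
    · rw [List.getD_append _ _ _ i h2, List.take_append_of_le_length h2.le]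
      exact h i hi h2
    · simpa using hv

theorem sub_snoc (y p : List ℕ) (b v : ℕ) :
    (y ++ [b]) <+ (p ++ [v]) ↔ (y ++ [b]) <+ p ∨ (b = v ∧ y <+ p) := by
  rw [← List.reverse_sublist, ← List.reverse_sublist (l₁ := y ++ [b]) (l₂ := p),
    ← List.reverse_sublist (l₁ := y) (l₂ := p)]
  simp only [List.reverse_append, List.reverse_singleton, List.singleton_append]
  rw [List.sublist_cons_iff]
  simp only [List.cons.injEq]
  constructor
  · rintro (h | ⟨r, ⟨h1, rfl⟩, h3⟩)
    · exact Or.inl h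
    · exact Or.inr ⟨h1, h3⟩
  · rintro (h | ⟨h1, h3⟩)
    · exact Or.inl h
    · exact Or.inr ⟨_, ⟨h1, rfl⟩, h3⟩

theorem sub4 (a b c d v : ℕ) (p : List ℕ) :
    [a,b,c,d] <+ (p ++ [v]) ↔ [a,b,c,d] <+ p ∨ (d = v ∧ [a,b,c] <+ p) :=
  sub_snoc [a,b,c] p d v
theorem sub3 (a b c v : ℕ) (p : List ℕ) :
    [a,b,c] <+ (p ++ [v]) ↔ [a,b,c] <+ p ∨ (c = v ∧ [a,b] <+ p) :=
  sub_snoc [a,b] p c v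
theorem sub2 (a b v : ℕ) (p : List ℕ) :
    [a,b] <+ (p ++ [v]) ↔ [a,b] <+ p ∨ (b = v ∧ a ∈ p) := by
  rw [← List.singleton_sublist]
  exact sub_snoc [a] p b v

theorem len4 (y : List ℕ) (h : y.length = 4) : ∃ a b c d, y = [a,b,c,d] := by
  match y, h with
  | [a,b,c,d], _ => exact ⟨a,b,c,d,rfl⟩

theorem cont0101 (x : List ℕ) : Contains [0,1,0,1] x ↔ ∃ a b, a < b ∧ [a,b,a,b] <+ x := by
  constructor
  · rintro ⟨y, hy, hl, h⟩
    obtain ⟨a,b,c,d,rfl⟩ := len4 y hl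
    have h01 := h 0 1 (by simp) (by simp)
    have h02 := h 0 2 (by simp) (by simp)
    have h20 := h 2 0 (by simp) (by simp)
    have h13 := h 1 3 (by simp) (by simp)
    have h31 := h 3 1 (by simp) (by simp)
    simp at h01 h02 h20 h13 h31
    obtain rfl : a = c := by omega
    obtain rfl : b = d := by omega
    exact ⟨a, b, h01, hy⟩
  · rintro ⟨a, b, hab, hy⟩
    refine ⟨_, hy, rfl, ?_⟩
    intro i j hi hj
    simp only [List.length_cons, List.length_nil] at hi hj
    interval_cases i <;> interval_cases j <;> simp <;> omega

theorem cont0120 (x : List ℕ) : Contains [0,1,2,0] x ↔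
    ∃ a b c, a < b ∧ b < c ∧ [a,b,c,a] <+ x := by
  constructor
  · rintro ⟨y, hy, hl, h⟩
    obtain ⟨a,b,c,d,rfl⟩ := len4 y hl
    have h01 := h 0 1 (by simp) (by simp)
    have h12 := h 1 2 (by simp) (by simp)
    have h03 := h 0 3 (by simp) (by simp)
    have h30 := h 3 0 (by simp) (by simp)
    simp at h01 h12 h03 h30
    obtain rfl : a = d := by omega
    exact ⟨a, b, c, h01, h12, hy⟩
  · rintro ⟨a, b, c, hab, hbc, hy⟩
    refine ⟨_, hy, rfl, ?_⟩
    intro i j hi hj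
    simp only [List.length_cons, List.length_nil] at hi hj
    interval_cases i <;> interval_cases j <;> simp <;> omega

theorem cont0121 (x : List ℕ) : Contains [0,1,2,1] x ↔
    ∃ a b c, a < b ∧ b < c ∧ [a,b,c,b] <+ x := by
  constructor
  · rintro ⟨y, hy, hl, h⟩
    obtain ⟨a,b,c,d,rfl⟩ := len4 y hl
    have h01 := h 0 1 (by simp) (by simp)
    have h12 := h 1 2 (by simp) (by simp)
    have h13 := h 1 3 (by simp) (by simp)
    have h31 := h 3 1 (by simp) (by simp)
    simp at h01 h12 h13 h31
    obtain rfl : b = d := by omega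
    exact ⟨a, b, c, h01, h12, hy⟩
  · rintro ⟨a, b, c, hab, hbc, hy⟩
    refine ⟨_, hy, rfl, ?_⟩
    intro i j hi hj
    simp only [List.length_cons, List.length_nil] at hi hj
    interval_cases i <;> interval_cases j <;> simp <;> omega

def Valid (x : List ℕ) : Prop :=
  IsAscSeq x ∧ Avoids [0, 1, 0, 1] x ∧ Avoids [0, 1, 2, 0] x ∧ Avoids [0, 1, 2, 1] x

theorem valid_snoc (p : List ℕ) (v : ℕ) (hp : p ≠ []) :
    Valid (p ++ [v]) ↔ Valid p ∧ v ≤ 1 + asc p ∧ (∀ a, a < v → ¬ [a,v,a] <+ p) ∧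
      (∀ b c, v < b → b < c → ¬ [v,b,c] <+ p) ∧ (∀ a c, a < v → v < c → ¬ [a,v,c] <+ p) := by
  unfold Valid Avoids
  rw [isAsc_snoc p v hp]
  simp only [cont0101, cont0120, cont0121, sub4, not_exists, not_and, not_or]
  constructor
  · rintro ⟨⟨h1, h2⟩, h3, h4, h5⟩
    refine ⟨⟨h1, fun a b h => (h3 a b h).1, fun a b c h h' => (h4 a b c h h').1,
      fun a b c h h' => (h5 a b c h h').1⟩, h2, fun a h => (h3 a v h).2 rfl,
      fun b c h h' => (h4 v b c h h').2 rfl, fun a c h h' => (h5 a v c h h').2 rfl⟩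
  · rintro ⟨⟨h1, h3, h4, h5⟩, h2, k3, k4, k5⟩
    refine ⟨⟨h1, h2⟩, fun a b h => ⟨h3 a b h, ?_⟩, fun a b c h h' => ⟨h4 a b c h h', ?_⟩,
      fun a b c h h' => ⟨h5 a b c h h', ?_⟩⟩
    · rintro rfl; exact k3 a h
    · rintro rfl; exact k4 b c h h'
    · rintro rfl; exact k5 a c h h'

theorem valid_prefix (p l : List ℕ) (hp : p ≠ []) (h : Valid (p ++ l)) : Valid p := by
  induction l using List.reverseRecOn with
  | nil => simpa using h
  | append_singleton l v ih =>
    rw [← List.append_assoc, valid_snoc _ _ (by simp [hp])] at h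
    exact ih h.1

def InvZ (p : List ℕ) : Prop := (∀ a ∈ p, a = 0) ∧ asc p = 0 ∧ p.getLast? = some 0
def InvA (p : List ℕ) : Prop := [0,1] <+ p ∧ ¬ [1,0] <+ p ∧ (∀ a ∈ p, a ≤ 1) ∧ asc p = 1 ∧
  p.getLast? = some 1
def InvB (p : List ℕ) : Prop := [0,1,0] <+ p ∧ (∀ a ∈ p, a ≤ 1) ∧ asc p = 1 ∧
  p.getLast? = some 0
def InvC (m : ℕ) (p : List ℕ) : Prop := 2 ≤ m ∧ (∀ a ∈ p, a ≤ m) ∧ (∀ a, a < m → ¬ [m,a] <+ p) ∧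
  (∀ v, 1 ≤ v → v < m → [0,v,m] <+ p) ∧ asc p = m ∧ p.getLast? = some m

theorem ne_of_last {p : List ℕ} {u : ℕ} (h : p.getLast? = some u) : p ≠ [] := by
  rintro rfl; simp at h

theorem mem3 {a b c : ℕ} {p : List ℕ} (h : [a,b,c] <+ p) : a ∈ p ∧ b ∈ p ∧ c ∈ p :=
  ⟨h.subset (by simp), h.subset (by simp), h.subset (by simp)⟩
theorem mem2 {a b : ℕ} {p : List ℕ} (h : [a,b] <+ p) : a ∈ p ∧ b ∈ p :=
  ⟨h.subset (by simp), h.subset (by simp)⟩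
theorem sub3_12 {a b c : ℕ} {p : List ℕ} (h : [a,b,c] <+ p) : [a,b] <+ p :=
  List.Sublist.trans (by simp) h
theorem sub3_13 {a b c : ℕ} {p : List ℕ} (h : [a,b,c] <+ p) : [a,c] <+ p :=
  List.Sublist.trans (by simp) h
theorem sub3_23 {a b c : ℕ} {p : List ℕ} (h : [a,b,c] <+ p) : [b,c] <+ p :=
  List.Sublist.trans (by simp) h

/- a new maximum is always fine -/
theorem valid_max (p : List ℕ) (v : ℕ) (hp : p ≠ []) (hv : Valid p) (h : ∀ a ∈ p, a < v)
    (ha : v ≤ 1 + asc p) : Valid (p ++ [v]) := by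
  rw [valid_snoc p v hp]
  refine ⟨hv, ha, fun a _ h' => ?_, fun b c _ _ h' => ?_, fun a c _ _ h' => ?_⟩
  · exact absurd (h _ (mem3 h').2.1) (lt_irrefl _)
  · exact absurd (h _ (mem3 h').1) (lt_irrefl _)
  · exact absurd (h _ (mem3 h').2.1) (lt_irrefl _)

theorem stepZ (p : List ℕ) (v : ℕ) (hi : InvZ p) (hv : Valid p) :
    Valid (p ++ [v]) ↔ v = 0 ∨ v = 1 := by
  obtain ⟨h0, ha, hl⟩ := hi
  have hp := ne_of_last hl
  constructor
  · intro h
    rw [valid_snoc p v hp] at h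
    have := h.2.1
    omega
  · rintro (rfl | rfl)
    · rw [valid_snoc p _ hp]
      refine ⟨hv, by omega, fun a h => by omega, fun b c h3 h2 h' => ?_, fun a c h => by omega⟩
      have := h0 _ (mem3 h').2.1
      omega
    · exact valid_max p 1 hp hv (fun a h => by rw [h0 a h]; omega) (by omega)

theorem stepZ0 (p : List ℕ) (hi : InvZ p) : InvZ (p ++ [0]) := by
  obtain ⟨h0, ha, hl⟩ := hi
  refine ⟨?_, ?_, by simp⟩
  · intro a h
    simp at h
    rcases h with h | h
    · exact h0 a h
    · exact h
  · rw [asc_snoc' p 0 _ hl]; simp [ha]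

theorem stepZ1 (p : List ℕ) (hi : InvZ p) : InvA (p ++ [1]) := by
  obtain ⟨h0, ha, hl⟩ := hi
  refine ⟨?_, ?_, ?_, ?_, by simp⟩
  · rw [sub2]; exact Or.inr ⟨rfl, List.mem_of_getLast? hl⟩
  · rw [sub2]
    rintro (h | h)
    · have := h0 _ (mem2 h).1; omega
    · omega
  · intro a h
    simp at h
    rcases h with h | h
    · rw [h0 a h]; omega
    · omega
  · rw [asc_snoc' p 0 _ hl]; simp [ha]

theorem to_C2 (p : List ℕ) (h01 : [0,1] <+ p) (h1 : ∀ a ∈ p, a ≤ 1) (ha : asc p = 1) (u : ℕ)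
    (hl : p.getLast? = some u) : InvC 2 (p ++ [2]) := by
  refine ⟨le_rfl, ?_, ?_, ?_, ?_, by simp⟩
  · intro a h
    simp at h
    rcases h with h | h
    · have := h1 a h; omega
    · omega
  · intro a h2 h
    rw [sub2] at h
    rcases h with h | h
    · have := h1 _ (mem2 h).1; omega
    · omega
  · intro v h h'
    obtain rfl : v = 1 := by omega
    rw [sub3]
    exact Or.inr ⟨rfl, h01⟩
  · have := h1 u (List.mem_of_getLast? hl)
    rw [asc_snoc' p u _ hl, if_pos (by omega), ha]

theorem stepA (p : List ℕ) (v : ℕ) (hi : InvA p) (hv : Valid p) :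
    Valid (p ++ [v]) ↔ v = 1 ∨ v = 0 ∨ v = 2 := by
  obtain ⟨h01, h10, h1, ha, hl⟩ := hi
  have hp := ne_of_last hl
  constructor
  · intro h
    rw [valid_snoc p v hp] at h
    have := h.2.1
    omega
  · rintro (rfl | rfl | rfl)
    · rw [valid_snoc p _ hp]
      refine ⟨hv, by omega, fun a h h' => ?_, fun b c h3 h2 h' => ?_, fun a c h h2 h' => ?_⟩
      · obtain rfl : a = 0 := by omega
        exact h10 (sub3_23 h')
      · have := h1 _ (mem3 h').2.1; omega
      · have := h1 _ (mem3 h').2.2; omega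
    · rw [valid_snoc p _ hp]
      refine ⟨hv, by omega, fun a h h' => ?_, fun b c h3 h2 h' => ?_, fun a c h h2 h' => ?_⟩
      · omega
      · have := h1 _ (mem3 h').2.2; omega
      · omega
    · exact valid_max p 2 hp hv (fun a h => by have := h1 a h; omega) (by omega)

theorem stepA1 (p : List ℕ) (hi : InvA p) : InvA (p ++ [1]) := by
  obtain ⟨h01, h10, h1, ha, hl⟩ := hi
  refine ⟨?_, ?_, ?_, ?_, by simp⟩
  · rw [sub2]; exact Or.inl h01
  · rw [sub2]
    rintro (h | h)
    · exact h10 h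
    · omega
  · intro a h
    simp at h
    rcases h with h | h
    · exact h1 a h
    · omega
  · rw [asc_snoc' p 1 _ hl]; simp [ha]

theorem stepA0 (p : List ℕ) (hi : InvA p) : InvB (p ++ [0]) := by
  obtain ⟨h01, h10, h1, ha, hl⟩ := hi
  refine ⟨?_, ?_, ?_, by simp⟩
  · rw [sub3]; exact Or.inr ⟨rfl, h01⟩
  · intro a h
    simp at h
    rcases h with h | h
    · exact h1 a h
    · omega
  · rw [asc_snoc' p 1 _ hl]; simp [ha]

theorem stepB (p : List ℕ) (v : ℕ) (hi : InvB p) (hv : Valid p) :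
    Valid (p ++ [v]) ↔ v = 0 ∨ v = 2 := by
  obtain ⟨h010, h1, ha, hl⟩ := hi
  have hp := ne_of_last hl
  constructor
  · intro h
    rw [valid_snoc p v hp] at h
    have h2 := h.2.1
    have h3 : v ≠ 1 := by
      rintro rfl
      exact h.2.2.1 0 (by omega) h010
    omega
  · rintro (rfl | rfl)
    · rw [valid_snoc p _ hp]
      refine ⟨hv, by omega, fun a h h' => ?_, fun b c h3 h2 h' => ?_, fun a c h h2 h' => ?_⟩
      · omega
      · have := h1 _ (mem3 h').2.2; omega
      · omega
    · exact valid_max p 2 hp hv (fun a h => by have := h1 a h; omega) (by omega)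

theorem stepB0 (p : List ℕ) (hi : InvB p) : InvB (p ++ [0]) := by
  obtain ⟨h010, h1, ha, hl⟩ := hi
  refine ⟨?_, ?_, ?_, by simp⟩
  · rw [sub3]; exact Or.inl h010
  · intro a h
    simp at h
    rcases h with h | h
    · exact h1 a h
    · omega
  · rw [asc_snoc' p 0 _ hl]; simp [ha]

theorem stepC (m : ℕ) (p : List ℕ) (v : ℕ) (hi : InvC m p) (hv : Valid p) :
    Valid (p ++ [v]) ↔ v = m ∨ v = m + 1 := by
  obtain ⟨hm, h1, h2, h3, ha, hl⟩ := hi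
  have hp := ne_of_last hl
  constructor
  · intro h
    rw [valid_snoc p v hp] at h
    obtain ⟨-, k1, k2, k3, k4⟩ := h
    by_contra hne
    rcases Nat.eq_zero_or_pos v with rfl | hpos
    · exact k3 1 m (by omega) (by omega) (h3 1 le_rfl (by omega))
    · exact k4 0 m hpos (by omega) (h3 v hpos (by omega))
  · rintro (rfl | rfl)
    · rw [valid_snoc p _ hp]
      refine ⟨hv, by omega, fun a h h' => ?_, fun b c h3 h2 h' => ?_, fun a c h h2 h' => ?_⟩
      · exact h2 a h (sub3_23 h')
      · have := h1 _ (mem3 h').2.2; omega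
      · have := h1 _ (mem3 h').2.2; omega
    · exact valid_max p _ hp hv (fun a h => by have := h1 a h; omega) (by omega)

theorem stepCm (m : ℕ) (p : List ℕ) (hi : InvC m p) : InvC m (p ++ [m]) := by
  obtain ⟨hm, h1, h2, h3, ha, hl⟩ := hi
  refine ⟨hm, ?_, ?_, ?_, ?_, by simp⟩
  · intro a h
    simp at h
    rcases h with h | h
    · exact h1 a h
    · omega
  · intro a h h'
    rw [sub2] at h'
    rcases h' with h' | h'
    · exact h2 a h h'
    · omega
  · intro v h h'
    rw [sub3]
    exact Or.inl (h3 v h h')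
  · rw [asc_snoc' p m _ hl]; simp [ha]

theorem stepCs (m : ℕ) (p : List ℕ) (hi : InvC m p) : InvC (m+1) (p ++ [m+1]) := by
  obtain ⟨hm, h1, h2, h3, ha, hl⟩ := hi
  refine ⟨by omega, ?_, ?_, ?_, ?_, by simp⟩
  · intro a h
    simp at h
    rcases h with h | h
    · have := h1 a h; omega
    · omega
  · intro a h h'
    rw [sub2] at h'
    rcases h' with h' | h'
    · have := h1 _ (mem2 h').1; omega
    · omega
  · intro v h h'
    rw [sub3]
    refine Or.inr ⟨rfl, ?_⟩
    rcases Nat.lt_succ_iff_lt_or_eq.1 h' with h4 | rfl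
    · exact sub3_12 (h3 v h h4)
    · exact sub3_13 (h3 1 le_rfl (by omega))
  · rw [asc_snoc' p m _ hl]; simp [ha]

def cons' (v : ℕ) (s : Finset (List ℕ)) : Finset (List ℕ) :=
  s.map ⟨List.cons v, List.cons_injective⟩

theorem mem_cons' (v : ℕ) (s : Finset (List ℕ)) (w : ℕ) (l : List ℕ) :
    w :: l ∈ cons' v s ↔ w = v ∧ l ∈ s := by
  simp [cons']
  constructor
  · rintro ⟨h, rfl⟩; exact ⟨rfl, h⟩
  · rintro ⟨rfl, h⟩; exact ⟨h, rfl⟩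

theorem card_cons' (v : ℕ) (s : Finset (List ℕ)) : (cons' v s).card = s.card := by
  simp [cons']

theorem disj_cons' (v w : ℕ) (s t : Finset (List ℕ)) (h : v ≠ w) :
    Disjoint (cons' v s) (cons' w t) := by
  rw [Finset.disjoint_left]
  rintro (_ | ⟨a, l⟩) h1 h2
  · simp [cons'] at h1
  · rw [mem_cons'] at h1 h2
    omega

def fC : ℕ → ℕ → Finset (List ℕ)
  | 0, _ => {[]}
  | n+1, m => cons' m (fC n m) ∪ cons' (m+1) (fC n (m+1))
def fB : ℕ → Finset (List ℕ)
  | 0 => {[]}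
  | n+1 => cons' 0 (fB n) ∪ cons' 2 (fC n 2)
def fA : ℕ → Finset (List ℕ)
  | 0 => {[]}
  | n+1 => cons' 1 (fA n) ∪ (cons' 0 (fB n) ∪ cons' 2 (fC n 2))
def fZ : ℕ → Finset (List ℕ)
  | 0 => {[]}
  | n+1 => cons' 0 (fZ n) ∪ cons' 1 (fA n)

theorem card_fC (n m : ℕ) : (fC n m).card = 2 ^ n := by
  induction n generalizing m with
  | zero => simp [fC]
  | succ n ih =>
    rw [fC, Finset.card_union_of_disjoint (disj_cons' _ _ _ _ (by omega)), card_cons', card_cons',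
      ih, ih]
    ring

theorem card_fB (n : ℕ) : (fB n).card = 2 ^ n := by
  induction n with
  | zero => simp [fB]
  | succ n ih =>
    rw [fB, Finset.card_union_of_disjoint (disj_cons' _ _ _ _ (by omega)), card_cons', card_cons',
      ih, card_fC]
    ring

theorem card_fA (n : ℕ) : (fA n).card + 1 = 2 ^ (n+1) := by
  induction n with
  | zero => simp [fA]
  | succ n ih =>
    rw [fA, Finset.card_union_of_disjoint, Finset.card_union_of_disjoint (disj_cons' _ _ _ _ (by omega)),
      card_cons', card_cons', card_cons', card_fC, card_fB]
    · rw [pow_succ 2 (n+1)]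
      have : 2 ^ (n+1) = 2 ^ n * 2 := pow_succ 2 n
      omega
    · rw [Finset.disjoint_union_right]
      exact ⟨disj_cons' _ _ _ _ (by omega), disj_cons' _ _ _ _ (by omega)⟩

theorem card_fZ (n : ℕ) : (fZ n).card + (n + 1) = 2 ^ (n+1) := by
  induction n with
  | zero => simp [fZ]
  | succ n ih =>
    rw [fZ, Finset.card_union_of_disjoint (disj_cons' _ _ _ _ (by omega)), card_cons', card_cons']
    have := card_fA n
    rw [pow_succ 2 (n+1)]
    omega

theorem valid_app (p : List ℕ) (v : ℕ) (l : List ℕ) (hp : p ≠ []) :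
    Valid (p ++ v :: l) ↔ Valid (p ++ [v]) ∧ Valid ((p ++ [v]) ++ l) := by
  have e : p ++ v :: l = (p ++ [v]) ++ l := by simp
  rw [e]
  exact ⟨fun h => ⟨valid_prefix _ _ (by simp) h, h⟩, fun h => h.2⟩

theorem mainC (l : List ℕ) (m : ℕ) (p : List ℕ) (hi : InvC m p) (hv : Valid p) :
    Valid (p ++ l) ↔ l ∈ fC l.length m := by
  induction l generalizing m p with
  | nil => simp [fC, hv]
  | cons v l ih =>
    rw [valid_app p v l (ne_of_last hi.2.2.2.2.2), List.length_cons, fC, Finset.mem_union, mem_cons',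
      mem_cons']
    have hs := stepC m p v hi hv
    constructor
    · rintro ⟨h1, h2⟩
      rcases hs.1 h1 with rfl | rfl
      · exact Or.inl ⟨rfl, (ih _ _ (stepCm _ p hi) h1).1 h2⟩
      · exact Or.inr ⟨rfl, (ih _ _ (stepCs _ p hi) h1).1 h2⟩
    · rintro (⟨rfl, h⟩ | ⟨rfl, h⟩)
      · have h1 := hs.2 (Or.inl rfl)
        exact ⟨h1, (ih _ _ (stepCm _ p hi) h1).2 h⟩
      · have h1 := hs.2 (Or.inr rfl)
        exact ⟨h1, (ih _ _ (stepCs _ p hi) h1).2 h⟩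

theorem mainB (l : List ℕ) (p : List ℕ) (hi : InvB p) (hv : Valid p) :
    Valid (p ++ l) ↔ l ∈ fB l.length := by
  induction l generalizing p with
  | nil => simp [fB, hv]
  | cons v l ih =>
    rw [valid_app p v l (ne_of_last hi.2.2.2), List.length_cons, fB, Finset.mem_union, mem_cons',
      mem_cons']
    have hs := stepB p v hi hv
    have hc := to_C2 p (sub3_12 hi.1) hi.2.1 hi.2.2.1 _ hi.2.2.2
    constructor
    · rintro ⟨h1, h2⟩
      rcases hs.1 h1 with rfl | rfl
      · exact Or.inl ⟨rfl, (ih _ (stepB0 p hi) h1).1 h2⟩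
      · exact Or.inr ⟨rfl, (mainC _ _ _ hc h1).1 h2⟩
    · rintro (⟨rfl, h⟩ | ⟨rfl, h⟩)
      · have h1 := hs.2 (Or.inl rfl)
        exact ⟨h1, (ih _ (stepB0 p hi) h1).2 h⟩
      · have h1 := hs.2 (Or.inr rfl)
        exact ⟨h1, (mainC _ _ _ hc h1).2 h⟩

theorem mainA (l : List ℕ) (p : List ℕ) (hi : InvA p) (hv : Valid p) :
    Valid (p ++ l) ↔ l ∈ fA l.length := by
  induction l generalizing p with
  | nil => simp [fA, hv]
  | cons v l ih =>
    rw [valid_app p v l (ne_of_last hi.2.2.2.2), List.length_cons, fA, Finset.mem_union,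
      Finset.mem_union, mem_cons', mem_cons', mem_cons']
    have hs := stepA p v hi hv
    have hc := to_C2 p hi.1 hi.2.2.1 hi.2.2.2.1 _ hi.2.2.2.2
    constructor
    · rintro ⟨h1, h2⟩
      rcases hs.1 h1 with rfl | rfl | rfl
      · exact Or.inl ⟨rfl, (ih _ (stepA1 p hi) h1).1 h2⟩
      · exact Or.inr (Or.inl ⟨rfl, (mainB _ _ (stepA0 p hi) h1).1 h2⟩)
      · exact Or.inr (Or.inr ⟨rfl, (mainC _ _ _ hc h1).1 h2⟩)
    · rintro (⟨rfl, h⟩ | ⟨rfl, h⟩ | ⟨rfl, h⟩)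
      · have h1 := hs.2 (Or.inl rfl)
        exact ⟨h1, (ih _ (stepA1 p hi) h1).2 h⟩
      · have h1 := hs.2 (Or.inr (Or.inl rfl))
        exact ⟨h1, (mainB _ _ (stepA0 p hi) h1).2 h⟩
      · have h1 := hs.2 (Or.inr (Or.inr rfl))
        exact ⟨h1, (mainC _ _ _ hc h1).2 h⟩

theorem mainZ (l : List ℕ) (p : List ℕ) (hi : InvZ p) (hv : Valid p) :
    Valid (p ++ l) ↔ l ∈ fZ l.length := by
  induction l generalizing p with
  | nil => simp [fZ, hv]
  | cons v l ih =>
    rw [valid_app p v l (ne_of_last hi.2.2), List.length_cons, fZ, Finset.mem_union,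
      mem_cons', mem_cons']
    have hs := stepZ p v hi hv
    constructor
    · rintro ⟨h1, h2⟩
      rcases hs.1 h1 with rfl | rfl
      · exact Or.inl ⟨rfl, (ih _ (stepZ0 p hi) h1).1 h2⟩
      · exact Or.inr ⟨rfl, (mainA _ _ (stepZ1 p hi) h1).1 h2⟩
    · rintro (⟨rfl, h⟩ | ⟨rfl, h⟩)
      · have h1 := hs.2 (Or.inl rfl)
        exact ⟨h1, (ih _ (stepZ0 p hi) h1).2 h⟩
      · have h1 := hs.2 (Or.inr rfl)
        exact ⟨h1, (mainA _ _ (stepZ1 p hi) h1).2 h⟩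

theorem len_cons' (v n : ℕ) (s : Finset (List ℕ)) (h : ∀ l ∈ s, l.length = n) :
    ∀ l ∈ cons' v s, l.length = n + 1 := by
  intro l hl
  simp only [cons', Finset.mem_map, Function.Embedding.coeFn_mk] at hl
  obtain ⟨a, ha, rfl⟩ := hl
  simp [h a ha]

theorem len_union (n : ℕ) (s t : Finset (List ℕ)) (h : ∀ l ∈ s, l.length = n)
    (h' : ∀ l ∈ t, l.length = n) : ∀ l ∈ s ∪ t, l.length = n := by
  intro l hl
  rcases Finset.mem_union.1 hl with hl | hl
  · exact h l hl
  · exact h' l hl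

theorem len_fC (n m : ℕ) : ∀ l ∈ fC n m, l.length = n := by
  induction n generalizing m with
  | zero => simp [fC]
  | succ n ih => exact len_union _ _ _ (len_cons' _ _ _ (ih _)) (len_cons' _ _ _ (ih _))
theorem len_fB (n : ℕ) : ∀ l ∈ fB n, l.length = n := by
  induction n with
  | zero => simp [fB]
  | succ n ih => exact len_union _ _ _ (len_cons' _ _ _ ih) (len_cons' _ _ _ (len_fC _ _))
theorem len_fA (n : ℕ) : ∀ l ∈ fA n, l.length = n := by
  induction n with
  | zero => simp [fA]
  | succ n ih =>
    exact len_union _ _ _ (len_cons' _ _ _ ih)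
      (len_union _ _ _ (len_cons' _ _ _ (len_fB _)) (len_cons' _ _ _ (len_fC _ _)))
theorem len_fZ (n : ℕ) : ∀ l ∈ fZ n, l.length = n := by
  induction n with
  | zero => simp [fZ]
  | succ n ih => exact len_union _ _ _ (len_cons' _ _ _ ih) (len_cons' _ _ _ (len_fA _))

theorem valid_zero : Valid [0] := by
  refine ⟨⟨by simp, by simp, ?_⟩, ?_, ?_, ?_⟩
  · intro i h h'; simp at h'; omega
  all_goals
    rintro ⟨y, hy, hl, -⟩
    have := hy.length_le
    simp at this hl
    omega

theorem invZ_zero : InvZ [0] := ⟨by simp, by simp [asc], by simp⟩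

theorem main_iff (n : ℕ) (x : List ℕ) : (x.length = n + 1 ∧ Valid x) ↔ x ∈ cons' 0 (fZ n) := by
  constructor
  · rintro ⟨hl, hv⟩
    match x, hl, hv with
    | v :: l, hl, hv =>
      have h0 : v = 0 := by simpa using hv.1.2.1
      subst h0
      rw [mem_cons']
      have : l.length = n := by simpa using hl
      refine ⟨rfl, ?_⟩
      rw [← this]
      exact (mainZ l [0] invZ_zero valid_zero).1 hv
  · intro h
    refine ⟨len_cons' _ _ _ (len_fZ n) x h, ?_⟩
    match x, h with
    | [], h => simp [cons'] at h
    | v :: l, h =>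
      rw [mem_cons'] at h
      obtain ⟨rfl, h⟩ := h
      have hl := len_fZ n l h
      rw [← hl] at h
      exact (mainZ l [0] invZ_zero valid_zero).2 h

theorem stmt_14 (n : ℕ) (hn : 1 ≤ n) :
    Nat.card {x : List ℕ // x.length = n ∧ IsAscSeq x ∧ Avoids [0, 1, 0, 1] x ∧ Avoids [0, 1, 2, 0] x ∧ Avoids [0, 1, 2, 1] x} = 2 ^ n - n := by
  obtain ⟨k, rfl⟩ : ∃ k, n = k + 1 := ⟨n - 1, by omega⟩
  have h := Nat.card_congr (Equiv.subtypeEquivRight (main_iff k))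
  unfold Valid at h
  rw [h, Nat.card_eq_fintype_card, Fintype.card_coe, card_cons']
  have := card_fZ k
  omega
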